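/- Let Γ ⊆ [0,∞) be a set of real numbers satisfying the descending chain condition and let r be a positive integer. Then there exists a finite set Γ₀ ⊆ Γ ∪ {0}, depending only on r and Γ, with the following property. Suppose a is an integer with 0 ≤ a ≤ r, e is an integer with e ≥ −r, l, m, n are nonnegative integers, p₁,…,p_l, q₁,…,q_m, λ₁,…,λ_n are positive integers, b₁,…,b_l, c₁,…,c_m, μ₁,…,μ_n are elements of Γ, and t ∈ Γ with 0 ≤ t < 1 are such that e + Σᵢ pᵢ·bᵢ + Σⱼ λⱼ·μⱼ > 0 and a = Σᵢ pᵢ·bᵢ + Σₖ qₖ·cₖ + Σⱼ λⱼ·μⱼ + (t/(1−t))·( e + Σᵢ pᵢ·bᵢ + Σⱼ λⱼ·μⱼ ). Then t ∈ Γ₀, and bᵢ ∈ Γ₀, cₖ ∈ Γ₀, μⱼ ∈ Γ₀ for all i, k, j. -/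

import Mathlib

/-!
Write `s` for the boundary-plus-nef contribution `∑ pᵢ bᵢ + ∑ λⱼ μⱼ`, `C` for `∑ qₖ cₖ`, and
`τ = t / (1 - t)`, so that the identity reads `a = s + C + τ (e + s)` with `e + s > 0`.

A DCC set of reals is partially well-ordered (`Set.IsPWO`), and so is the additive monoid `A`
generated by a DCC set of nonnegative reals; in particular `s` and `C` lie in a partially
well-ordered set, however many summands there are. The right-hand side of the identity is monotone
in `(e, t, s, C)`, and strictly so except that `e` is irrelevant when `t = 0`. After normalising
`e = 1` in that case, the solutions `(e, t, s, C)` for a fixed `a` form an antichain in a partially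
well-ordered set (`e ≥ -r` is an integer), so there are finitely many of them
(`finite_solutions`). No upper bound on `e` is needed.

By the same antichain argument a given `s` has only finitely many decompositions `s = x + y` with
`x ∈ Γ` and `y ∈ A` (`finite_parts`), and every coefficient `bᵢ`, `cₖ`, `μⱼ` occurs as such an `x`.
-/

/-- A set of real numbers satisfies the descending chain condition (DCC) if it
contains no infinite strictly decreasing sequence. -/
def DCC (S : Set ℝ) : Prop := ∀ f : ℕ → ℝ, (∀ k, f k ∈ S) → ¬ StrictAnti f

theorem DCC.isPWO {Γ : Set ℝ} (h : DCC Γ) : Γ.IsPWO :=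
  Set.isPWO_iff_isWF.2 (Set.isWF_iff_no_descending_seq.2 fun f hf hm => h f hm hf)

theorem closure_nonneg {Γ : Set ℝ} (hΓ : Γ ⊆ Set.Ici (0 : ℝ)) {x : ℝ} (hx : x ∈ AddSubmonoid.closure Γ) :
    0 ≤ x :=
  (AddSubmonoid.closure_le (S := AddSubmonoid.nonneg ℝ)).2 hΓ hx

/-- The elements of `Γ` that occur as a summand of `s` when `s` is written as a sum of
elements of `Γ`. -/
def parts (Γ : Set ℝ) (s : ℝ) : Set ℝ := {x | x ∈ Γ ∧ ∃ y ∈ AddSubmonoid.closure Γ, x + y = s}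

theorem finite_parts {Γ : Set ℝ} (hΓ : Γ ⊆ Set.Ici (0 : ℝ)) (h : Γ.IsPWO) (s : ℝ) :
    (parts Γ s).Finite := by
  have hA : (AddSubmonoid.closure Γ : Set ℝ).IsPWO := h.addSubmonoid_closure hΓ
  have hfin : {v : ℝ × ℝ | v ∈ Γ ×ˢ (AddSubmonoid.closure Γ : Set ℝ) ∧ v.1 + v.2 = s}.Finite := by
    refine IsAntichain.finite_of_partiallyWellOrderedOn (r := (· ≤ ·)) ?_
      ((h.prod hA).mono fun v hv => hv.1)
    rintro ⟨x, y⟩ ⟨-, h1⟩ ⟨x', y'⟩ ⟨-, h2⟩ hne hle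
    obtain ⟨hx, hy⟩ := Prod.mk_le_mk.1 hle
    simp only at h1 h2
    exact hne (Prod.ext (by simp only; linarith) (by simp only; linarith))
  refine (hfin.image Prod.fst).subset ?_
  rintro x ⟨hx, y, hy, hxy⟩
  exact ⟨(x, y), ⟨⟨hx, hy⟩, hxy⟩, rfl⟩

/-- The solutions `(k, t, s, C)` of `a = s + C + t / (1 - t) * (e + s)`, where `e = k - r`, so that
the condition `e ≥ -r` becomes `k : ℕ`. When `t = 0` the value of `e` does not affect the equation,
and it is normalised to `e = 1`. -/
def solutions (Γ : Set ℝ) (r : ℕ) (a : ℤ) : Set (ℕ × ℝ × ℝ × ℝ) :=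
  {v | v ∈ (Set.univ : Set ℕ) ×ˢ Γ ×ˢ (AddSubmonoid.closure Γ : Set ℝ) ×ˢ (AddSubmonoid.closure Γ : Set ℝ) ∧
    0 ≤ v.2.1 ∧ v.2.1 < 1 ∧ (v.2.1 = 0 → v.1 = r + 1) ∧ 0 < (v.1 : ℝ) - r + v.2.2.1 ∧
    (a : ℝ) = v.2.2.1 + v.2.2.2 + v.2.1 / (1 - v.2.1) * ((v.1 : ℝ) - r + v.2.2.1)}

theorem finite_solutions {Γ : Set ℝ} (hΓ : Γ ⊆ Set.Ici (0 : ℝ)) (h : Γ.IsPWO) (r : ℕ) (a : ℤ) :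
    (solutions Γ r a).Finite := by
  have hA : (AddSubmonoid.closure Γ : Set ℝ).IsPWO := h.addSubmonoid_closure hΓ
  refine IsAntichain.finite_of_partiallyWellOrderedOn (r := (· ≤ ·)) ?_
    (((Set.isPWO_of_wellQuasiOrderedLE Set.univ).prod (h.prod (hA.prod hA))).mono fun v hv => hv.1)
  rintro ⟨k, t, s, C⟩ ⟨-, ht0, ht1, htk, hg, he⟩ ⟨k', t', s', C'⟩ ⟨-, ht0', ht1', htk', hg', he'⟩
    hne hle
  simp only [Prod.mk_le_mk] at hle
  obtain ⟨hk, ht, hs, hC⟩ := hle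
  simp only at ht0 ht1 htk hg he ht0' ht1' htk' hg' he'
  have hkR : (k : ℝ) ≤ k' := by exact_mod_cast hk
  have hτ : t / (1 - t) ≤ t' / (1 - t') := by
    apply div_le_div₀ ht0' ht <;> linarith
  have hτ0' : 0 ≤ t' / (1 - t') := div_nonneg ht0' (by linarith)
  have h1 : t / (1 - t) * ((k : ℝ) - r + s) ≤ t' / (1 - t') * ((k : ℝ) - r + s) :=
    mul_le_mul_of_nonneg_right hτ hg.le
  have h2 : t' / (1 - t') * ((k : ℝ) - r + s) ≤ t' / (1 - t') * ((k' : ℝ) - r + s') :=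
    mul_le_mul_of_nonneg_left (by linarith) hτ0'
  have es : s = s' := by linarith
  have eC : C = C' := by linarith
  have et : t = t' := by
    have : t / (1 - t) = t' / (1 - t') := mul_right_cancel₀ hg.ne' (by linarith)
    rw [div_eq_div_iff (by linarith) (by linarith)] at this
    linarith
  have ek : k = k' := by
    rcases ht0'.eq_or_lt with h0 | h0
    · rw [htk (et.trans h0.symm), htk' h0.symm]
    · have : (k : ℝ) - r + s = (k' : ℝ) - r + s' :=
        mul_left_cancel₀ (div_pos h0 (sub_pos.2 ht1')).ne' (by linarith)
      have : (k : ℝ) = k' := by linarith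
      exact_mod_cast this
  subst es eC et ek
  exact hne rfl

theorem sum_mem_closure {Γ : Set ℝ} {n : ℕ} (p : Fin n → ℕ) (b : Fin n → ℝ)
    (hb : ∀ i, b i ∈ Γ) : ∑ i, (p i : ℝ) * b i ∈ AddSubmonoid.closure Γ := by
  refine sum_mem fun i _ => ?_
  rw [← nsmul_eq_mul]
  exact nsmul_mem (AddSubmonoid.subset_closure (hb i)) _

theorem mem_parts_sum_add {Γ : Set ℝ} {n : ℕ} (p : Fin n → ℕ) (b : Fin n → ℝ)
    (hp : ∀ i, 0 < p i) (hb : ∀ i, b i ∈ Γ) {z : ℝ} (hz : z ∈ AddSubmonoid.closure Γ) (i : Fin n) :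
    b i ∈ parts Γ (∑ i, (p i : ℝ) * b i + z) := by
  -- The complementary summand: one copy of `b i` is removed from `p i * b i`.
  refine ⟨hb i, (((p i - 1 : ℕ) : ℝ) * b i + ∑ j ∈ Finset.univ.erase i, (p j : ℝ) * b j) + z,
    add_mem (add_mem ?_ (sum_mem fun j _ => ?_)) hz, ?_⟩
  · rw [← nsmul_eq_mul]
    exact nsmul_mem (AddSubmonoid.subset_closure (hb i)) _
  · rw [← nsmul_eq_mul]
    exact nsmul_mem (AddSubmonoid.subset_closure (hb j)) _
  · rw [← Finset.add_sum_erase _ _ (Finset.mem_univ i), Nat.cast_sub (hp i)]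
    push_cast
    ring

theorem stmt_9 (Γ : Set ℝ) (hΓ : Γ ⊆ Set.Ici (0 : ℝ)) (hDCC : DCC Γ)
    (r : ℕ) (hr : 0 < r) :
    ∃ Γ₀ : Set ℝ, Γ₀ ⊆ Γ ∪ {0} ∧ Γ₀.Finite ∧
      ∀ (a e : ℤ), 0 ≤ a → a ≤ (r : ℤ) → -(r : ℤ) ≤ e →
        ∀ (l m n : ℕ) (p : Fin l → ℕ) (q : Fin m → ℕ) (lam : Fin n → ℕ)
          (b : Fin l → ℝ) (c : Fin m → ℝ) (mu : Fin n → ℝ),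
          (∀ i, 0 < p i) → (∀ k, 0 < q k) → (∀ j, 0 < lam j) →
          (∀ i, b i ∈ Γ) → (∀ k, c k ∈ Γ) → (∀ j, mu j ∈ Γ) →
          ∀ t : ℝ, t ∈ Γ → 0 ≤ t → t < 1 →
            0 < (e : ℝ) + (∑ i, (p i : ℝ) * b i) + (∑ j, (lam j : ℝ) * mu j) →
            (a : ℝ) = (∑ i, (p i : ℝ) * b i) + (∑ k, (q k : ℝ) * c k)
                + (∑ j, (lam j : ℝ) * mu j)
                + (t / (1 - t)) *
                    ((e : ℝ) + (∑ i, (p i : ℝ) * b i) + (∑ j, (lam j : ℝ) * mu j)) →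
            (t ∈ Γ₀ ∧ (∀ i, b i ∈ Γ₀) ∧ (∀ k, c k ∈ Γ₀) ∧ (∀ j, mu j ∈ Γ₀)) := by
  have hP := hDCC.isPWO
  set F : Set (ℕ × ℝ × ℝ × ℝ) := ⋃ a ∈ Set.Icc (0 : ℤ) r, solutions Γ r a with hF
  have hFfin : F.Finite :=
    (Set.finite_Icc (0 : ℤ) r).biUnion fun a _ => finite_solutions hΓ hP r a
  refine ⟨⋃ v ∈ F, ({v.2.1} ∪ (parts Γ v.2.2.1 ∪ parts Γ v.2.2.2)), ?_, ?_, ?_⟩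
  · refine Set.iUnion₂_subset fun v hv => ?_
    obtain ⟨a, -, ha⟩ := Set.mem_iUnion₂.1 hv
    rintro x (rfl | hx | hx)
    · exact Or.inl ha.1.2.1
    · exact Or.inl hx.1
    · exact Or.inl hx.1
  · exact hFfin.biUnion fun v _ => (Set.finite_singleton _).union
      ((finite_parts hΓ hP _).union (finite_parts hΓ hP _))
  · intro a e ha0 har hre l m n p q lam b c mu hp hq hlam hb hc hmu t ht ht0 ht1 hpos heq
    have hB := sum_mem_closure p b hb
    have hC := sum_mem_closure q c hc
    have hM := sum_mem_closure lam mu hmu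
    have hbP := fun i => mem_parts_sum_add p b hp hb hM i
    have hmP := fun j => mem_parts_sum_add lam mu hlam hmu hB j
    have hcP := fun k => mem_parts_sum_add q c hq hc (zero_mem (AddSubmonoid.closure Γ)) k
    rw [add_zero] at hcP
    rw [add_comm] at hmP
    generalize ∑ i, (p i : ℝ) * b i = B at *
    generalize ∑ k, (q k : ℝ) * c k = C at *
    generalize ∑ j, (lam j : ℝ) * mu j = M at *
    obtain ⟨k, hk⟩ : ∃ k : ℕ, (k, t, B + M, C) ∈ F := by
      have hBM : B + M ∈ AddSubmonoid.closure Γ := add_mem hB hM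
      rcases ht0.eq_or_lt with h0 | h0
      · refine ⟨r + 1, Set.mem_iUnion₂.2 ⟨a, ⟨ha0, har⟩,
          ⟨⟨trivial, ht, hBM, hC⟩, ht0, ht1, fun _ => rfl, ?_, ?_⟩⟩⟩
        · have := closure_nonneg hΓ hBM
          push_cast
          linarith
        · subst h0
          simp only [zero_div, zero_mul, add_zero] at heq ⊢
          linarith
      · obtain ⟨k, hk⟩ := Int.eq_ofNat_of_zero_le (show 0 ≤ e + r by linarith)
        have hkR : (e : ℝ) + r = k := by exact_mod_cast hk
        have hs : (k : ℝ) - r + (B + M) = e + B + M := by rw [← hkR]; ring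
        refine ⟨k, Set.mem_iUnion₂.2 ⟨a, ⟨ha0, har⟩,
          ⟨⟨trivial, ht, hBM, hC⟩, ht0, ht1, fun h => absurd h h0.ne', ?_, ?_⟩⟩⟩
        · simp only [hs]
          exact hpos
        · simp only [hs]
          linarith
    exact ⟨Set.mem_iUnion₂.2 ⟨_, hk, Or.inl rfl⟩,
      fun i => Set.mem_iUnion₂.2 ⟨_, hk, Or.inr (Or.inl (hbP i))⟩,
      fun i => Set.mem_iUnion₂.2 ⟨_, hk, Or.inr (Or.inr (hcP i))⟩,
      fun i => Set.mem_iUnion₂.2 ⟨_, hk, Or.inr (Or.inl (hmP i))⟩⟩
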